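/- Let b > 0 and let ρ : [0,b] → ℝ be continuous with ρ(0) ≤ 0. Suppose there exist constants ε > 0 and C > 0 such that for every t ∈ [0,b) with 0 < ρ(t) ≤ ε one has D₊ρ(t) ≤ C·ρ(t). Then ρ(b) ≤ 0. -/

import Mathlib

/-!
Mathlib's real-valued `liminf` takes the junk value `0` when the true lower Dini derivative is
`+∞`, so the hypothesis only says that, where `0 < ρ ≤ ε`, either `D₊ρ ≤ C ρ` or `D₊ρ = +∞`.
The conclusion survives this weakening, by a Baire category argument.

If `ρ b > 0`, there is an interval `[p, q]` with `ρ p ≤ 0 < ρ q` and `0 < ρ ≤ ε` on `(p, q)`.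
For small `c > 0` the function `φ t = exp (-C t) ρ t - c t` still satisfies `φ p < φ q`. For
`v ∈ (φ p, φ q)` let `r v` be the last point of `[p, q]` where `φ ≤ v`; then `φ (r v) = v`, and
`φ > v` to the right of `r v`. At `x = r v` this forces `D₊ρ x > C ρ x`, so that `D₊ρ x = +∞`,
and `φ` has right derivative `+∞` at `x`. Hence the injective function `r` has right derivative
`0` at every `v`. This is impossible (`exists_eq_of_hasDerivWithinAt_Ici_zero`): by Baire, `r`
is Lipschitz on some subinterval, and there it is continuous with zero right derivative, hence
constant. The two geometric steps are combined in `exists_not_tendsto_slope_atTop`.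
-/

open Filter Set

open scoped Topology

/-- No continuity is assumed: a function with zero right derivative everywhere may jump (from the
left) at many points, but by Baire category it is constant on some subinterval. -/
lemma exists_eq_of_hasDerivWithinAt_Ici_zero {r : ℝ → ℝ} {v₀ v₁ : ℝ} (hv : v₀ < v₁)
    (hr : ∀ v ∈ Ioo v₀ v₁, HasDerivWithinAt r 0 (Ici v) v) :
    ∃ v ∈ Ioo v₀ v₁, ∃ w ∈ Ioo v₀ v₁, v < w ∧ r v = r w := by
  -- `V k`: the points at which `r` is `1`-Lipschitz to the right, at scale `1 / (k + 1)`.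
  let V : ℕ → Set ℝ := fun k => {v | v ∈ Ioo v₀ v₁ ∧
    ∀ w, v ≤ w → w ≤ v + 1 / ((k : ℝ) + 1) → |r w - r v| ≤ w - v}
  have hcover : ⋃ k, (closure (V k) ∪ (Iic v₀ ∪ Ici v₁)) = univ := by
    refine eq_univ_of_forall fun v => ?_
    by_cases hvI : v ∈ Ioo v₀ v₁
    · have h1 := (hasDerivWithinAt_iff_isLittleO.1 (hr v hvI)).def one_pos
      obtain ⟨δ, hδ, hδ'⟩ := Metric.mem_nhdsWithin_iff.1 h1
      obtain ⟨k, hk⟩ := exists_nat_one_div_lt hδ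
      refine mem_iUnion.2 ⟨k, Or.inl (subset_closure ⟨hvI, fun w hvw hw => ?_⟩)⟩
      have hmem : w ∈ Metric.ball v δ ∩ Ici v := by
        refine ⟨?_, hvw⟩
        rw [Metric.mem_ball, Real.dist_eq, abs_of_nonneg (by linarith)]
        linarith
      have := hδ' hmem
      simpa [abs_of_nonneg (sub_nonneg.2 hvw)] using this
    · refine mem_iUnion.2 ⟨0, Or.inr ?_⟩
      by_cases h : v₀ < v
      · exact Or.inr (not_lt.1 fun h' => hvI ⟨h, h'⟩)
      · exact Or.inl (not_lt.1 h)
  have hdense := dense_iUnion_interior_of_closed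
    (fun k => isClosed_closure.union (isClosed_Iic.union isClosed_Ici)) hcover
  obtain ⟨z, hz, hzI⟩ := hdense.inter_open_nonempty _ isOpen_Ioo (nonempty_Ioo.2 hv)
  obtain ⟨k, hzk⟩ := mem_iUnion.1 hzI
  have hnhds : Ioo v₀ v₁ ∩ interior (closure (V k) ∪ (Iic v₀ ∪ Ici v₁)) ∈ 𝓝 z :=
    (isOpen_Ioo.inter isOpen_interior).mem_nhds ⟨hz, hzk⟩
  obtain ⟨δ, hδ, hball⟩ := Metric.mem_nhds_iff.1 hnhds
  have hk0 : (0 : ℝ) < 1 / ((k : ℝ) + 1) := by positivity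
  obtain ⟨d, hzd, hd⟩ : ∃ d, z < d ∧ d < z + min δ (1 / ((k : ℝ) + 1)) :=
    exists_between (by linarith [lt_min hδ hk0])
  have hdδ : d < z + δ := hd.trans_le (by linarith [min_le_left δ (1 / ((k : ℝ) + 1))])
  have hdk : d < z + 1 / ((k : ℝ) + 1) :=
    hd.trans_le (by linarith [min_le_right δ (1 / ((k : ℝ) + 1))])
  have hsub : ∀ v ∈ Icc z d, v ∈ Ioo v₀ v₁ ∧ v ∈ closure (V k) := by
    intro v hv
    have hvb : v ∈ Metric.ball z δ := by
      rw [Metric.mem_ball, Real.dist_eq, abs_of_nonneg (by linarith [hv.1])]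
      linarith [hv.2]
    obtain ⟨h1, h2⟩ := hball hvb
    refine ⟨h1, ?_⟩
    rcases interior_subset h2 with h | h | h
    · exact h
    · exact absurd h1.1 (not_lt.2 h)
    · exact absurd h1.2 (not_lt.2 h)
  -- The Lipschitz bound passes from the dense set `V k` to all points by right continuity.
  have hlip : ∀ v ∈ Icc z d, ∀ w ∈ Icc z d, v < w → |r w - r v| ≤ w - v := by
    intro v hvI w hwI hvw
    by_contra hcon
    have hc : Tendsto (fun u => |r w - r u| - (w - u)) (𝓝[>] v) (𝓝 (|r w - r v| - (w - v))) := by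
      have h1 : Tendsto r (𝓝[>] v) (𝓝 (r v)) :=
        ((hr v (hsub v hvI).1).continuousWithinAt).mono Ioi_subset_Ici_self
      have h2 : Tendsto (fun u : ℝ => u) (𝓝[>] v) (𝓝 v) := tendsto_id.mono_left nhdsWithin_le_nhds
      exact (h1.const_sub _).abs.sub (h2.const_sub _)
    have hpos := hc.eventually (lt_mem_nhds (show (0 : ℝ) < |r w - r v| - (w - v) by linarith))
    obtain ⟨e, hve, he⟩ := (mem_nhdsGT_iff_exists_Ioo_subset.1 hpos)
    have hve' : v < min e w := lt_min hve hvw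
    obtain ⟨m, hm1, hm2⟩ := exists_between hve'
    have hm3 := hm2.trans_le (min_le_right e w)
    have hmc : m ∈ closure (V k) := (hsub m ⟨hvI.1.trans hm1.le, hm3.le.trans hwI.2⟩).2
    obtain ⟨u, hu, huV⟩ := mem_closure_iff.1 hmc _ isOpen_Ioo ⟨hm1, hm2⟩
    have hue := he ⟨hu.1, hu.2.trans_le (min_le_left _ _)⟩
    have huw := hu.2.trans_le (min_le_right e w)
    have := huV.2 w huw.le (by linarith [hwI.2, hvI.1, hu.1])
    simp only [mem_ofPred_eq] at hue
    linarith
  have hcont : ContinuousOn r (Icc z d) := by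
    have : LipschitzOnWith 1 r (Icc z d) := by
      refine LipschitzOnWith.of_dist_le_mul fun x hx y hy => ?_
      rw [NNReal.coe_one, one_mul, Real.dist_eq, Real.dist_eq]
      rcases lt_trichotomy x y with h | h | h
      · rw [abs_sub_comm, abs_sub_comm x y, abs_of_pos (sub_pos.2 h)]
        exact hlip x hx y hy h
      · simp [h]
      · rw [abs_of_pos (sub_pos.2 h)]
        exact hlip y hy x hx h
    exact this.continuousOn
  have hconst := constant_of_has_deriv_right_zero hcont
    (fun x hx => hr x (hsub x ⟨hx.1, hx.2.le⟩).1)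
  exact ⟨z, hz, d, (hsub d ⟨hzd.le, le_rfl⟩).1, hzd, (hconst d ⟨hzd.le, le_rfl⟩).symm⟩

/-- The right derivative of a continuous function that increases from `p` to `q` cannot be `+∞`
at all points lying strictly below the graph to their right: otherwise the map `r` sending a
value to the last point where it is attained would contradict
`exists_eq_of_hasDerivWithinAt_Ici_zero`. -/
lemma exists_not_tendsto_slope_atTop {φ : ℝ → ℝ} {p q : ℝ} (hpq : p < q)
    (hφ : ContinuousOn φ (Icc p q)) (hlt : φ p < φ q) :
    ∃ x ∈ Ioo p q, (∀ y ∈ Ioc x q, φ x < φ y) ∧ ¬ Tendsto (slope φ x) (𝓝[>] x) atTop := by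
  by_contra! hcon
  have hex : ∀ v ∈ Ioo (φ p) (φ q), ∃ x ∈ Ioo p q, φ x = v ∧ ∀ y ∈ Ioc x q, v < φ y := by
    intro v hv
    have hcl : IsCompact (Icc p q ∩ φ ⁻¹' Iic v) :=
      isCompact_Icc.of_isClosed_subset (hφ.preimage_isClosed_of_isClosed isClosed_Icc isClosed_Iic)
        inter_subset_left
    obtain ⟨x, ⟨hxI, hxv⟩, hub⟩ := hcl.exists_isGreatest ⟨p, ⟨le_rfl, hpq.le⟩, hv.1.le⟩
    have hgt : ∀ y ∈ Ioc x q, v < φ y := fun y hy => by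
      by_contra hyv
      exact absurd (hub ⟨⟨hxI.1.trans hy.1.le, hy.2⟩, not_lt.1 hyv⟩) (not_le.2 hy.1)
    obtain ⟨y, hy, hyv⟩ := intermediate_value_Icc hxI.2
      (hφ.mono (Icc_subset_Icc_left hxI.1)) ⟨hxv, hv.2.le⟩
    have hyx : y = x := by
      by_contra hne
      exact absurd hyv (hgt y ⟨lt_of_le_of_ne hy.1 (Ne.symm hne), hy.2⟩).ne'
    subst hyx
    refine ⟨y, ⟨lt_of_le_of_ne hxI.1 ?_, lt_of_le_of_ne hxI.2 ?_⟩, hyv, hgt⟩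
    · rintro rfl
      exact hv.1.ne hyv
    · rintro rfl
      exact hv.2.ne' hyv
  choose! r hrI hrv hrgt using hex
  obtain ⟨v, hv, w, hw, hvw, heq⟩ := exists_eq_of_hasDerivWithinAt_Ici_zero (r := r) hlt (by
    intro v hv
    have hx := hrI v hv
    have htop := hcon (r v) hx (by rw [hrv v hv]; exact hrgt v hv)
    rw [hasDerivWithinAt_iff_isLittleO, Asymptotics.isLittleO_iff]
    intro e he
    have h1 := htop.eventually_ge_atTop (1 / e)
    obtain ⟨a, hva, ha⟩ := mem_nhdsGT_iff_exists_Ioo_subset.1 h1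
    obtain ⟨d, hd1, hd2⟩ := exists_between (lt_min hva hx.2)
    have hda := hd2.trans_le (min_le_left _ _)
    have hdq := hd2.trans_le (min_le_right _ _)
    -- `φ` exceeds `v` by a definite amount on `[d, q]`, so `r w < d` for `w` close to `v`.
    obtain ⟨y₀, hy₀, hmin⟩ := isCompact_Icc.exists_isMinOn (nonempty_Icc.2 hdq.le)
      (hφ.mono (Icc_subset_Icc_left (hx.1.trans hd1).le))
    have hm : v < φ y₀ := hrgt v hv y₀ ⟨hd1.trans_le hy₀.1, hy₀.2⟩
    have hnear : Iio (min (φ y₀) (φ q)) ∈ 𝓝 v := Iio_mem_nhds (lt_min hm hv.2)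
    filter_upwards [mem_nhdsWithin_of_mem_nhds hnear, self_mem_nhdsWithin] with w hw hvw
    rcases eq_or_lt_of_le (show v ≤ w from hvw) with rfl | hvw
    · simp
    have hwI : w ∈ Ioo (φ p) (φ q) := ⟨hv.1.trans hvw, lt_of_lt_of_le hw (min_le_right _ _)⟩
    have hwm : w < φ y₀ := lt_of_lt_of_le hw (min_le_left _ _)
    have hrw := hrI w hwI
    have hlt1 : r w < d := by
      by_contra hge
      have := hmin ⟨not_lt.1 hge, hrw.2.le⟩
      simp only [mem_ofPred_eq, hrv w hwI] at this
      linarith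
    have hlt2 : r v < r w := by
      by_contra hge
      rcases eq_or_lt_of_le (not_lt.1 hge) with h | h
      · have := hrv w hwI
        rw [h, hrv v hv] at this
        linarith
      · have := hrgt w hwI (r v) ⟨h, hx.2.le⟩
        rw [hrv v hv] at this
        linarith
    have hsl := ha ⟨hlt2, hlt1.trans hda⟩
    simp only [mem_ofPred_eq, slope_def_field, hrv w hwI, hrv v hv] at hsl
    rw [div_le_div_iff₀ he (sub_pos.2 hlt2)] at hsl
    simp only [smul_zero, sub_zero, Real.norm_eq_abs, abs_of_pos (sub_pos.2 hlt2),
      abs_of_pos (sub_pos.2 hvw)]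
    linarith)
  have := hrv w hw
  rw [← heq, hrv v hv] at this
  exact hvw.ne this

/-- Lemma 2.2 (case `D₊`): if `ρ : [0,b] → ℝ` is continuous, `ρ 0 ≤ 0`, and there are
`ε, C > 0` such that the lower right Dini derivative
`D₊ρ(t) = liminf_{h→0⁺} (ρ (t+h) - ρ t)/h` satisfies `D₊ρ(t) ≤ C · ρ t` whenever
`0 < ρ t ≤ ε` on `[0,b)`, then `ρ b ≤ 0`. -/
theorem gap_lemma_Dini_lower_right
    (b : ℝ) (hb : 0 < b) (ρ : ℝ → ℝ)
    (hcont : ContinuousOn ρ (Set.Icc 0 b))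
    (h0 : ρ 0 ≤ 0)
    (ε C : ℝ) (hε : 0 < ε) (hC : 0 < C)
    (hDini : ∀ t ∈ Set.Ico 0 b, 0 < ρ t → ρ t ≤ ε →
      Filter.liminf (fun h : ℝ => (ρ (t + h) - ρ t) / h) (nhdsWithin 0 (Set.Ioi 0))
        ≤ C * ρ t) :
    ρ b ≤ 0 := by
  by_contra! hρb
  have hm : 0 < min ε (ρ b) := lt_min hε hρb
  set m := min ε (ρ b) with hm_def
  obtain ⟨p, ⟨hpI, hp⟩, hpub⟩ := (isCompact_Icc.of_isClosed_subset
    (hcont.preimage_isClosed_of_isClosed isClosed_Icc (isClosed_Iic (a := (0 : ℝ))))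
    inter_subset_left).exists_isGreatest ⟨0, ⟨le_rfl, hb.le⟩, h0⟩
  have hcont' : ContinuousOn ρ (Icc p b) := hcont.mono (Icc_subset_Icc_left hpI.1)
  obtain ⟨q, ⟨hqI, hq⟩, hqlb⟩ := (isCompact_Icc.of_isClosed_subset
    (hcont'.preimage_isClosed_of_isClosed isClosed_Icc (isClosed_Ici (a := m)))
    inter_subset_left).exists_isLeast ⟨b, ⟨hpI.2, le_rfl⟩, show m ≤ ρ b from min_le_right _ _⟩
  simp only [mem_preimage, mem_Iic, mem_Ici] at hp hq
  have hpq : p < q := lt_of_le_of_ne hqI.1 (by rintro rfl; linarith)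
  have hrange : ∀ t ∈ Ioo p q, 0 < ρ t ∧ ρ t ≤ ε := by
    intro t ht
    have htb : t ≤ b := ht.2.le.trans hqI.2
    constructor
    · by_contra h
      exact absurd (hpub ⟨⟨hpI.1.trans ht.1.le, htb⟩, not_lt.1 h⟩) (not_le.2 ht.1)
    · by_contra h
      refine absurd (hqlb ⟨⟨ht.1.le, htb⟩, ?_⟩) (not_le.2 ht.2)
      exact (min_le_left _ _).trans (not_le.1 h).le
  set c := Real.exp (-C * q) * m / (2 * (q - p)) with hc_def
  have hqp : 0 < q - p := sub_pos.2 hpq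
  have hc : 0 < c := by positivity
  have hcq : c * (q - p) = Real.exp (-C * q) * m / 2 := by rw [hc_def]; field_simp
  let φ : ℝ → ℝ := fun t => Real.exp (-C * t) * ρ t - c * t
  have hφ : ContinuousOn φ (Icc p q) := by
    have : ContinuousOn ρ (Icc p q) := hcont'.mono (Icc_subset_Icc_right hqI.2)
    fun_prop
  have hlt : φ p < φ q := by
    have h1 : Real.exp (-C * p) * ρ p ≤ 0 := mul_nonpos_of_nonneg_of_nonpos (Real.exp_pos _).le hp
    have h2 : Real.exp (-C * q) * m ≤ Real.exp (-C * q) * ρ q :=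
      mul_le_mul_of_nonneg_left hq (Real.exp_pos _).le
    have h3 : 0 < Real.exp (-C * q) * m := by positivity
    simp only [φ]
    linarith
  obtain ⟨x, hx, hgt, hnot⟩ := exists_not_tendsto_slope_atTop hpq hφ hlt
  apply hnot
  have hD := hDini x ⟨hpI.1.trans hx.1.le, hx.2.trans_le hqI.2⟩ (hrange x hx).1 (hrange x hx).2
  -- `B` is a lower barrier for `ρ` to the right of `x`, touching at `x`, of slope `> C * ρ x`.
  let B : ℝ → ℝ := fun t => Real.exp (C * t) * (φ x + c * t)
  have hBx : B x = ρ x := by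
    simp only [B, φ, sub_add_cancel, ← mul_assoc, ← Real.exp_add]
    simp
  have hB' : HasDerivAt B (C * ρ x + c * Real.exp (C * x)) x := by
    have h1 : HasDerivAt (fun t => Real.exp (C * t)) (Real.exp (C * x) * (C * 1)) x :=
      ((hasDerivAt_id x).const_mul C).exp
    have h2 : HasDerivAt (fun t => φ x + c * t) (c * 1) x :=
      ((hasDerivAt_id x).const_mul c).const_add _
    refine (h1.mul h2).congr_deriv ?_
    rw [← hBx]
    simp only [B]
    ring
  have hcx : 0 < c * Real.exp (C * x) := by positivity
  have hBs : Tendsto (slope B x) (𝓝[>] x) (𝓝 (C * ρ x + c * Real.exp (C * x))) :=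
    (hasDerivAt_iff_tendsto_slope.1 hB').mono_left
      (nhdsWithin_mono _ fun y hy => ne_of_gt hy)
  obtain ⟨l, hl1, hl2⟩ := exists_between
    (show C * ρ x < C * ρ x + c * Real.exp (C * x) by linarith)
  have hlow : ∀ᶠ y in 𝓝[>] x, l ≤ slope ρ x y := by
    filter_upwards [hBs.eventually (lt_mem_nhds hl2), Ioo_mem_nhdsGT hx.2] with y hy hyI
    refine hy.le.trans ?_
    have hyx : 0 < y - x := sub_pos.2 hyI.1
    have hBy : B y ≤ ρ y := by
      have h1 := hgt y ⟨hyI.1, hyI.2.le⟩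
      have h2 : ρ y = Real.exp (C * y) * (φ y + c * y) := by
        simp only [φ, sub_add_cancel, ← mul_assoc, ← Real.exp_add]
        simp
      rw [h2]
      exact mul_le_mul_of_nonneg_left (by linarith) (Real.exp_pos _).le
    rw [slope_def_field, slope_def_field, hBx]
    gcongr
  have hmap : Tendsto (fun h : ℝ => x + h) (𝓝[>] 0) (𝓝[>] x) := by
    refine tendsto_nhdsWithin_iff.2 ⟨?_, ?_⟩
    · have : Tendsto (fun h : ℝ => x + h) (𝓝 0) (𝓝 (x + 0)) := (continuous_const_add x).tendsto 0
      rw [add_zero] at this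
      exact this.mono_left nhdsWithin_le_nhds
    · filter_upwards [self_mem_nhdsWithin] with h hh
      simpa using hh
  have hmap' : Tendsto (fun y : ℝ => y - x) (𝓝[>] x) (𝓝[>] 0) := by
    refine tendsto_nhdsWithin_iff.2 ⟨?_, ?_⟩
    · have : Tendsto (fun y : ℝ => y - x) (𝓝 x) (𝓝 (x - x)) :=
        (continuous_id.sub continuous_const).tendsto x
      rw [sub_self] at this
      exact this.mono_left nhdsWithin_le_nhds
    · filter_upwards [self_mem_nhdsWithin] with h hh
      simpa using hh
  -- If the eventual lower bounds of the quotient were bounded, `liminf` would be genuine and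
  -- at least `l > C * ρ x`; so they are unbounded, and the quotient tends to `+∞`.
  have hunb : ¬ BddAbove {a : ℝ | ∀ᶠ h in 𝓝[>] (0 : ℝ), a ≤ (ρ (x + h) - ρ x) / h} := by
    intro hbdd
    rw [liminf_eq] at hD
    have hlmem : ∀ᶠ h in 𝓝[>] (0 : ℝ), l ≤ (ρ (x + h) - ρ x) / h := by
      filter_upwards [hmap.eventually hlow] with h hh
      simpa [slope_def_field] using hh
    exact absurd ((le_csSup hbdd hlmem).trans hD) (not_le.2 hl1)
  have htop : Tendsto (slope ρ x) (𝓝[>] x) atTop := by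
    refine tendsto_atTop.2 fun N => ?_
    obtain ⟨a, ha, hNa⟩ := not_bddAbove_iff.1 hunb N
    filter_upwards [hmap'.eventually ha] with y hy
    rw [add_sub_cancel] at hy
    rw [slope_def_field]
    exact hNa.le.trans hy
  have hE : Tendsto (fun y => Real.exp (-C * y)) (𝓝[>] x) (𝓝 (Real.exp (-C * x))) :=
    ((by fun_prop : Continuous fun y => Real.exp (-C * y)).tendsto x).mono_left nhdsWithin_le_nhds
  have hEs : Tendsto (slope (fun y => Real.exp (-C * y)) x) (𝓝[>] x)
      (𝓝 (Real.exp (-C * x) * (-C * 1))) :=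
    (hasDerivAt_iff_tendsto_slope.1 ((hasDerivAt_id x).const_mul (-C)).exp).mono_left
      (nhdsWithin_mono _ fun y hy => ne_of_gt hy)
  refine ((hE.pos_mul_atTop (Real.exp_pos _) htop).atTop_add
    ((hEs.const_mul (ρ x)).sub_const c)).congr' ?_
  filter_upwards [self_mem_nhdsWithin] with y hy
  have hyx : y - x ≠ 0 := (sub_pos.2 hy).ne'
  simp only [slope_def_field, φ]
  field_simp
  ring
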